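/- arXiv:1102.4122 — 2 statements merged into one kernel-verified Lean document; each statement's English description precedes it below -/
import Mathlib

section
/- For each integer n ≥ 12 there exists a system S ⊆ E_n such that S has infinitely many integer solutions and every integer solution (x_1,...,x_n) of S satisfies max(|x_1|,...,|x_n|) > 2^(2^(n-1)); that is, all integer solutions of S belong to ℤ^n \ [-2^(2^(n-1)), 2^(2^(n-1))]^n. -/
/-!
The negative Pell equation `x ^ 2 + 1 = 5 * u ^ 2` has infinitely many solutions, and they satisfy
`2 * u = fib (2 * k + 1)`. As `fib` is a strong divisibility sequence, `2 * 5 ^ 4 ∣ fib m` holds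
exactly when `3 * 5 ^ 4 ∣ m`. Hence infinitely many solutions have the form `u = 625 * y`, and all
of these come from an index `2 * k + 1 ≥ 1875`, which makes `x ^ 2 + 1` exceed `2 ^ 2 ^ 11`.
Twelve variables suffice to express this equation with `x ^ 2 + 1` as one of the variables, and
each further variable squares the previous one.
-/

/-- A system of equations `S ⊆ E_n`: a set of equations of the forms
`x_i = 1`, `x_i + x_j = x_k`, `x_i * x_j = x_k` with `i, j, k ∈ {1, …, n}`. -/
structure EqnSystem (n : ℕ) where
  ones : Set (Fin n)
  adds : Set (Fin n × Fin n × Fin n)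
  muls : Set (Fin n × Fin n × Fin n)

/-- A tuple `x` solves the system `S` when it satisfies every equation of `S`. -/
def EqnSystem.Solves {n : ℕ} {R : Type*} [Add R] [Mul R] [One R]
    (S : EqnSystem n) (x : Fin n → R) : Prop :=
  (∀ i ∈ S.ones, x i = 1) ∧
  (∀ t ∈ S.adds, x t.1 + x t.2.1 = x t.2.2) ∧
  (∀ t ∈ S.muls, x t.1 * x t.2.1 = x t.2.2)

open Nat (fib)

section Fibonacci

theorem fib_two_mul_add_one_sq (k : ℕ) :
    fib (2 * k + 1) ^ 2 = fib (2 * k) * fib (2 * k + 1) + fib (2 * k) ^ 2 + 1 := by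
  have cassini := Int.fib_succ_mul_fib_pred_sub_fib_sq (2 * k + 1 : ℕ)
  rw [Int.natAbs_natCast, Odd.neg_one_pow (odd_two_mul_add_one k)] at cassini
  push_cast at cassini
  rw [add_sub_cancel_right, add_assoc, one_add_one_eq_two, Int.fib_add_two] at cassini
  zify
  simp only [← Int.fib_natCast]
  push_cast
  linear_combination -cassini

-- Descent: if `a ≠ 0`, then `(2 * a - b, b - a)` is a smaller solution, obtained from
-- `a + b * φ` by multiplication with `φ⁻²`, where `φ` is the golden ratio.
theorem exists_eq_fib_of_sq_eq {a b : ℕ} (h : b ^ 2 = a * b + a ^ 2 + 1) :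
    ∃ k, a = fib (2 * k) ∧ b = fib (2 * k + 1) := by
  induction a using Nat.strong_induction_on generalizing b with
  | _ a ih =>
    obtain rfl | ha := Nat.eq_zero_or_pos a
    · exact ⟨0, rfl, by simpa using h⟩
    have hab : a < b := by nlinarith
    have hba : b ≤ 2 * a := by nlinarith
    obtain ⟨c, rfl⟩ := Nat.exists_eq_add_of_le hab.le
    obtain ⟨d, rfl⟩ := Nat.exists_eq_add_of_le (show c ≤ a by lia)
    obtain ⟨k, hd, hc⟩ := ih d (by lia) (b := c) (by linarith)
    refine ⟨k + 1, ?_, ?_⟩ <;>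
      simp only [Nat.mul_succ, Nat.fib_add_two, ← hd, ← hc] <;> lia

theorem sq_add_one_eq_five_mul_sq_iff {x u : ℕ} :
    x ^ 2 + 1 = 5 * u ^ 2 ↔ ∃ k, x = fib (2 * k) + u ∧ 2 * u = fib (2 * k + 1) := by
  constructor
  · intro h
    obtain ⟨a, rfl⟩ := Nat.exists_eq_add_of_le (show u ≤ x by nlinarith)
    obtain ⟨k, ha, hu⟩ := exists_eq_fib_of_sq_eq (a := a) (b := 2 * u) (by linarith)
    exact ⟨k, by lia, hu⟩
  · rintro ⟨k, rfl, hu⟩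
    have hsq := fib_two_mul_add_one_sq k
    rw [← hu] at hsq
    linarith

theorem dvd_iff_prime_pow_dvd_of_isStrongDvdSequence {f : ℕ → ℕ} (hf : Nat.IsStrongDvdSequence f)
    {d p k m : ℕ} (hp : p.Prime) (hd : d ∣ f (p ^ (k + 1))) (hd' : ¬ d ∣ f (p ^ k)) :
    d ∣ f m ↔ p ^ (k + 1) ∣ m := by
  refine ⟨fun h ↦ ?_, fun h ↦ hd.trans (hf.isDvdSequence _ _ h)⟩
  have hgcd : d ∣ f (m.gcd (p ^ (k + 1))) := hf m _ ▸ Nat.dvd_gcd h hd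
  have hk : ¬ m.gcd (p ^ (k + 1)) ∣ p ^ k :=
    fun hdvd ↦ hd' (hgcd.trans (hf.isDvdSequence _ _ hdvd))
  exact Nat.gcd_eq_right_iff_dvd.mp
    (Nat.eq_prime_pow_of_dvd_least_prime_pow hp hk (Nat.gcd_dvd_right _ _))

theorem two_dvd_fib_iff {m : ℕ} : 2 ∣ fib m ↔ 3 ∣ m :=
  dvd_iff_prime_pow_dvd_of_isStrongDvdSequence Nat.isStrongDvdSequence_fib (k := 0)
    Nat.prime_three (by decide) (by decide)

theorem five_pow_four_dvd_fib_iff {m : ℕ} : 5 ^ 4 ∣ fib m ↔ 5 ^ 4 ∣ m :=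
  dvd_iff_prime_pow_dvd_of_isStrongDvdSequence Nat.isStrongDvdSequence_fib
    Nat.prime_five (by norm_num) (by norm_num)

theorem two_mul_five_pow_four_dvd_fib_iff {m : ℕ} : 2 * 5 ^ 4 ∣ fib m ↔ 3 * 5 ^ 4 ∣ m := by
  rw [← Nat.Coprime.lcm_eq_mul (by norm_num), ← Nat.Coprime.lcm_eq_mul (by norm_num),
    Nat.lcm_dvd_iff, Nat.lcm_dvd_iff, two_dvd_fib_iff, five_pow_four_dvd_fib_iff]

theorem two_mul_four_pow_le_fib (n : ℕ) : 2 * 4 ^ n ≤ fib (3 * n + 3) := by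
  induction n with
  | zero => decide
  | succ n ih =>
    have hfib : 4 * fib (3 * n + 3) ≤ fib (3 * n + 6) := by
      simp only [Nat.fib_add_two]
      lia
    rw [pow_succ]
    lia

end Fibonacci

section Pell

theorem infinite_setOf_exists_sq_add_one_eq :
    {y : ℕ | ∃ x : ℕ, x ^ 2 + 1 = 5 * (625 * y) ^ 2}.Infinite := by
  have hfib (j : ℕ) : ∃ y, fib (2 * (1875 * j + 937) + 1) = 1250 * y :=
    two_mul_five_pow_four_dvd_fib_iff.mpr ⟨2 * j + 1, by ring⟩
  choose y hy using hfib
  refine Set.infinite_of_injective_forall_mem (f := y) (fun i j hij ↦ ?_) fun j ↦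
    ⟨_, sq_add_one_eq_five_mul_sq_iff.mpr ⟨1875 * j + 937, rfl, by rw [hy]; ring⟩⟩
  have hindex := Nat.fib_strictMonoOn.injOn (Set.mem_Ici.mpr (by lia)) (Set.mem_Ici.mpr (by lia))
    ((hy i).trans (hij ▸ (hy j).symm))
  lia

theorem four_pow_le_of_sq_add_one_eq {x y : ℕ} (h : x ^ 2 + 1 = 5 * (625 * y) ^ 2) :
    4 ^ 624 ≤ 625 * y := by
  obtain ⟨k, -, hu⟩ := sq_add_one_eq_five_mul_sq_iff.mp h
  have hdvd : 1875 ∣ 2 * k + 1 :=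
    two_mul_five_pow_four_dvd_fib_iff.mp ⟨y, by rw [← hu]; ring⟩
  have hle : 2 * 4 ^ 624 ≤ 2 * (625 * y) := by
    rw [hu]
    exact (two_mul_four_pow_le_fib 624).trans (Nat.fib_mono (Nat.le_of_dvd (by lia) hdvd))
  exact le_of_mul_le_mul_left hle two_pos

set_option exponentiation.threshold 2048 in
theorem two_pow_two_pow_lt_sq_add_one {x y : ℤ} (h : x ^ 2 + 1 = 5 * (625 * y) ^ 2) :
    2 ^ 2 ^ 11 < x ^ 2 + 1 := by
  have hnat : x.natAbs ^ 2 + 1 = 5 * (625 * y.natAbs) ^ 2 := by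
    zify
    simpa [mul_pow] using h
  calc (2 : ℤ) ^ 2 ^ 11 < 5 * (4 ^ 624) ^ 2 := by norm_num
    _ ≤ 5 * (625 * |y|) ^ 2 := by
      gcongr
      rw [Int.abs_eq_natAbs]
      exact_mod_cast four_pow_le_of_sq_add_one_eq hnat
    _ = x ^ 2 + 1 := by rw [h, mul_pow, mul_pow, sq_abs]

end Pell

section System

/-- A subsystem of `E_(m+12)` that encodes the negative Pell equation
`x ^ 2 + 1 = 5 * (625 * y) ^ 2` followed by `m` squarings: `z 9` is `x`, `z 6` is `y`, `z 11` stands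
for both sides of the equation, and `z (i + 1) = z i ^ 2` for `11 ≤ i`. Variables are numbered
from `0`. -/
def pellSystem (m : ℕ) : EqnSystem (m + 12) where
  ones := {0}
  adds := {(0, 0, 1), (1, 1, 2), (2, 0, 3), (10, 0, 11)}
  muls := {(3, 3, 4), (4, 4, 5), (5, 6, 7), (7, 7, 8), (9, 9, 10), (3, 8, 11)} ∪
    Set.range fun i : Fin m ↦ (i.castSucc.addNat 11, i.castSucc.addNat 11, i.succ.addNat 11)

theorem pellSystem_solves_iff {R : Type*} [Add R] [Mul R] [One R] {m : ℕ}
    {z : Fin (m + 12) → R} :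
    (pellSystem m).Solves z ↔
      z 0 = 1 ∧
      (z 0 + z 0 = z 1 ∧ z 1 + z 1 = z 2 ∧ z 2 + z 0 = z 3 ∧ z 10 + z 0 = z 11) ∧
      (z 3 * z 3 = z 4 ∧ z 4 * z 4 = z 5 ∧ z 5 * z 6 = z 7 ∧ z 7 * z 7 = z 8 ∧
        z 9 * z 9 = z 10 ∧ z 3 * z 8 = z 11) ∧
      ∀ i : Fin m, z (i.castSucc.addNat 11) * z (i.castSucc.addNat 11) = z (i.succ.addNat 11) := by
  simp only [EqnSystem.Solves, pellSystem, Set.mem_singleton_iff, forall_eq, Set.mem_insert_iff,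
    Set.mem_union, or_imp, forall_and, Set.forall_mem_range]

variable {R : Type*} [Semiring R] {m : ℕ}

/-- The solution of `pellSystem m` that extends a solution `(x, y)` of the Pell equation. -/
def pellTuple (m : ℕ) (x y : R) : Fin (m + 12) → R :=
  Matrix.vecAppend (show m + 12 = 11 + (m + 1) by lia)
    ![1, 2, 4, 5, 25, 625, y, 625 * y, (625 * y) ^ 2, x, x ^ 2]
    fun i : Fin (m + 1) ↦ (x ^ 2 + 1) ^ 2 ^ (i : ℕ)

theorem pellTuple_addNat (x y : R) (i : Fin (m + 1)) :
    pellTuple m x y (i.addNat 11) = (x ^ 2 + 1) ^ 2 ^ (i : ℕ) := by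
  simp [pellTuple, Matrix.vecAppend_eq_ite]

theorem pellTuple_solves {x y : R} (h : x ^ 2 + 1 = 5 * (625 * y) ^ 2) :
    (pellSystem m).Solves (pellTuple m x y) := by
  have hsq (i : Fin m) : pellTuple m x y (i.castSucc.addNat 11) *
      pellTuple m x y (i.castSucc.addNat 11) = pellTuple m x y (i.succ.addNat 11) := by
    simp only [pellTuple_addNat, Fin.val_castSucc, Fin.val_succ, pow_succ, pow_mul, ← sq]
  refine pellSystem_solves_iff.mpr ⟨?_, ?_, ?_, hsq⟩
  · simp [pellTuple]
  · change (1 : R) + 1 = 2 ∧ (2 : R) + 2 = 4 ∧ (4 : R) + 1 = 5 ∧ x ^ 2 + 1 = (x ^ 2 + 1) ^ 2 ^ 0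
    norm_num
  · change (5 : R) * 5 = 25 ∧ (25 : R) * 25 = 625 ∧ 625 * y = 625 * y ∧
      625 * y * (625 * y) = (625 * y) ^ 2 ∧ x * x = x ^ 2 ∧
      5 * (625 * y) ^ 2 = (x ^ 2 + 1) ^ 2 ^ 0
    norm_num [← sq, h]

theorem sq_add_one_eq_of_pellSystem_solves {z : Fin (m + 12) → R} (hz : (pellSystem m).Solves z) :
    z 9 ^ 2 + 1 = 5 * (625 * z 6) ^ 2 := by
  obtain ⟨h₀, ⟨h₁, h₂, h₃, h₁₁⟩, ⟨h₄, h₅, h₇, h₈, h₁₀, h₁₁'⟩, -⟩ := pellSystem_solves_iff.mp hz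
  have hfive : z 3 = 5 := by rw [← h₃, ← h₂, ← h₁, h₀]; norm_num
  have h625 : z 5 = 625 := by rw [← h₅, ← h₄, hfive]; norm_num
  calc z 9 ^ 2 + 1 = z 11 := by rw [← h₁₁, ← h₁₀, h₀, sq]
    _ = 5 * (625 * z 6) ^ 2 := by rw [← h₁₁', ← h₈, ← h₇, hfive, h625, sq]

theorem apply_addNat_of_pellSystem_solves {z : Fin (m + 12) → R} (hz : (pellSystem m).Solves z)
    (i : Fin (m + 1)) : z (i.addNat 11) = (z 9 ^ 2 + 1) ^ 2 ^ (i : ℕ) := by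
  obtain ⟨h₀, ⟨-, -, -, h₁₁⟩, ⟨-, -, -, -, h₁₀, -⟩, hsq⟩ := pellSystem_solves_iff.mp hz
  induction i using Fin.induction with
  | zero =>
    calc z 11 = z 9 ^ 2 + 1 := by rw [← h₁₁, ← h₁₀, h₀, sq]
      _ = (z 9 ^ 2 + 1) ^ 2 ^ 0 := by simp
  | succ i ih =>
    rw [← hsq, ih, Fin.val_succ, Fin.val_castSucc, pow_succ 2, pow_mul, sq (_ ^ 2 ^ (i : ℕ))]

end System

/-- For each integer `n ≥ 12` there exists a system `S ⊆ E_n` which has infinitely many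
integer solutions, all of which lie outside the box `[-2^(2^(n-1)), 2^(2^(n-1))]^n`. -/
theorem small_system_with_only_large_solutions (n : ℕ) (hn : 12 ≤ n) :
    ∃ S : EqnSystem n,
      {x : Fin n → ℤ | S.Solves x}.Infinite ∧
      ∀ x : Fin n → ℤ, S.Solves x → ∃ i : Fin n, (2 : ℤ) ^ 2 ^ (n - 1) < |x i| := by
  obtain ⟨m, rfl⟩ := Nat.exists_eq_add_of_le' hn
  refine ⟨pellSystem m, Set.Infinite.of_image (fun z ↦ z 6) ?_, fun z hz ↦ ⟨Fin.last (m + 11), ?_⟩⟩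
  · refine (infinite_setOf_exists_sq_add_one_eq.image Nat.cast_injective.injOn).mono ?_
    rintro _ ⟨y, ⟨x, h⟩, rfl⟩
    exact ⟨pellTuple m x y, pellTuple_solves (mod_cast h), by simp [pellTuple]⟩
  · have hlast : z (Fin.last (m + 11)) = (z 9 ^ 2 + 1) ^ 2 ^ m :=
      apply_addNat_of_pellSystem_solves hz (Fin.last m)
    calc (2 : ℤ) ^ 2 ^ (m + 12 - 1) = (2 ^ 2 ^ 11) ^ 2 ^ m := by
          rw [← pow_mul, ← pow_add, Nat.add_comm 11 m, Nat.add_sub_assoc (by lia)]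
      _ < (z 9 ^ 2 + 1) ^ 2 ^ m :=
          pow_lt_pow_left₀ (two_pow_two_pow_lt_sq_add_one
            (sq_add_one_eq_of_pellSystem_solves hz)) (by positivity) (by positivity)
      _ ≤ |z (Fin.last (m + 11))| := hlast ▸ le_abs_self _
end

section
/- Let n ≥ 2 and let (x_1,...,x_n) = (2^(2^(n-1)), 2^(2^(n-2)), 2^(2^(n-3)), ..., 16, 4, 2), i.e. x_i = 2^(2^(n-i)) for i ∈ {1,...,n}. If integers y_1,...,y_n satisfy: for all i,j,k ∈ {1,...,n}, x_i + x_j = x_k implies y_i + y_j = y_k, and x_i · x_j = x_k implies y_i · y_j = y_k, then either (y_1,...,y_n) = (0,...,0) or (y_1,...,y_n) = (x_1,...,x_n). -/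
/-! Reading the tuple backwards, each entry is the square of the preceding one, starting from
`a = y_n`, so `y_i = a ^ 2 ^ (n - i)`. The only additive relation needed is `2 + 2 = 4`: it gives
`a + a = a * a`, whence `a = 0` or `a = 2`. -/

theorem eq_zero_or_eq_two_of_add_self_eq_mul_self {R : Type*} [NonAssocSemiring R]
    [IsRightCancelMulZero R] {a : R} (h : a + a = a * a) : a = 0 ∨ a = 2 := by
  rw [← two_mul, mul_eq_mul_right_iff] at h
  exact h.symm.imp_right Eq.symm

theorem pow_two_pow_mul_self {M : Type*} [Monoid M] (a : M) (k : ℕ) :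
    a ^ 2 ^ k * a ^ 2 ^ k = a ^ 2 ^ (k + 1) := by
  rw [← pow_add, ← two_mul, ← pow_succ']

theorem eq_pow_two_pow_of_mul_self_eq_succ {M : Type*} [Monoid M] {m : ℕ} {z : Fin (m + 1) → M}
    (hz : ∀ j : Fin m, z j.castSucc * z j.castSucc = z j.succ) (j : Fin (m + 1)) :
    z j = z 0 ^ 2 ^ (j : ℕ) := by
  induction j using Fin.induction with
  | zero => simp
  | succ j ih => rw [← hz, ih, Fin.val_castSucc, pow_two_pow_mul_self, Fin.val_succ]

theorem eq_zero_or_eq_two_pow_two_pow_of_mul_self_eq_succ {R : Type*} [Semiring R]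
    [IsRightCancelMulZero R] {m : ℕ} {z : Fin (m + 2) → R} (hadd : z 0 + z 0 = z 1)
    (hmul : ∀ j : Fin (m + 1), z j.castSucc * z j.castSucc = z j.succ) :
    (∀ j, z j = 0) ∨ ∀ j, z j = 2 ^ 2 ^ (j : ℕ) := by
  have hpow := eq_pow_two_pow_of_mul_self_eq_succ hmul
  have hself : z 0 + z 0 = z 0 * z 0 := hadd.trans (hmul 0).symm
  refine (eq_zero_or_eq_two_of_add_self_eq_mul_self hself).imp (fun h j => ?_) fun h j => ?_
  · rw [hpow, h, zero_pow (by positivity)]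
  · rw [hpow, h]

theorem doubling_tuple_rigidity_general {S R : Type*} [Semiring S] [Semiring R]
    [IsRightCancelMulZero R] (n : ℕ) (hn : 2 ≤ n) (x : Fin n → S) (y : Fin n → R)
    (hx : ∀ i : Fin n, x i = 2 ^ 2 ^ (n - 1 - (i : ℕ)))
    (hadd : ∀ i j k : Fin n, x i + x j = x k → y i + y j = y k)
    (hmul : ∀ i j k : Fin n, x i * x j = x k → y i * y j = y k) :
    (∀ i : Fin n, y i = 0) ∨ (∀ i : Fin n, y i = 2 ^ 2 ^ (n - 1 - (i : ℕ))) := by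
  obtain ⟨m, rfl⟩ := Nat.exists_eq_add_of_le' hn
  have val_rev (i : Fin (m + 2)) : (i.rev : ℕ) = m + 2 - 1 - i := by rw [Fin.val_rev]; omega
  have hx_rev (j : Fin (m + 2)) : x j.rev = 2 ^ 2 ^ (j : ℕ) := by
    rw [hx, ← val_rev, Fin.rev_rev]
  have hadd_rev : y (Fin.rev 0) + y (Fin.rev 0) = y (Fin.rev 1) :=
    hadd _ _ _ (by rw [hx_rev, hx_rev]; norm_num)
  have hmul_rev (j : Fin (m + 1)) :
      y j.castSucc.rev * y j.castSucc.rev = y j.succ.rev :=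
    hmul _ _ _ (by rw [hx_rev, hx_rev, Fin.val_castSucc, pow_two_pow_mul_self, Fin.val_succ])
  refine (eq_zero_or_eq_two_pow_two_pow_of_mul_self_eq_succ (z := fun j => y j.rev)
    hadd_rev hmul_rev).imp (fun h i => ?_) fun h i => ?_
  · simpa only [Fin.rev_rev] using h i.rev
  · simpa only [Fin.rev_rev, val_rev] using h i.rev

/-- For `n ≥ 2` and the tuple `(x_1, …, x_n) = (2^(2^(n-1)), 2^(2^(n-2)), …, 16, 4, 2)`,
i.e. `x_i = 2^(2^(n-i))`, any integers `y_1, …, y_n` preserving all additive and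
multiplicative relations among the `x_i` form either the zero tuple or the tuple
`(x_1, …, x_n)` itself. (Index `i : Fin n` corresponds to `x_{i+1} = 2^(2^(n-1-i))`.) -/
theorem doubling_tuple_rigidity (n : ℕ) (hn : 2 ≤ n) (x y : Fin n → ℤ)
    (hx : ∀ i : Fin n, x i = 2 ^ 2 ^ (n - 1 - (i : ℕ)))
    (hadd : ∀ i j k : Fin n, x i + x j = x k → y i + y j = y k)
    (hmul : ∀ i j k : Fin n, x i * x j = x k → y i * y j = y k) :
    (∀ i : Fin n, y i = 0) ∨ (∀ i : Fin n, y i = x i) := by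
  simpa only [hx] using doubling_tuple_rigidity_general n hn x y hx hadd hmul
end
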